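/- Let A be an m×m symmetric positive semidefinite matrix, and let (w,c) be a pair of random vectors with values in ℝ^k × ℝ^m having finite second moments and such that the matrix E[wwᵀ] is invertible. Then the set of m×k matrices V minimizing E[(1/2)(Vw − c)ᵀA(Vw − c)] equals { V_LS + Ṽ : A Ṽ = 0 }, where V_LS is the unique minimizer of E[(1/2)‖Vw − c‖₂²]. In particular, every minimizer of the least-squares objective E[(1/2)‖Vw − c‖₂²] is also a minimizer of E[(1/2)(Vw − c)ᵀA(Vw − c)]. -/

import Mathlib

/-!
Write `M = E[wwᵀ]` and `C = E[cwᵀ]`. For positive semidefinite `A` the objective is a convex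
quadratic in `V` with gradient `A(VM − C)`, so `V` is a minimizer exactly when `A(VM − C) = 0`.
Least squares is the case `A = 1`, where the condition reads `VM = C`; this implies the condition
for every `A`. When `M` is invertible, `VM − C = (V − CM⁻¹)M`, hence `A(VM − C) = 0` if and only if
`A(V − CM⁻¹) = 0`.
-/

open MeasureTheory Matrix

/-- The weighted quadratic objective `V ↦ E[(1/2)(Vw − c)ᵀ A (Vw − c)]`. -/
noncomputable def quadObj {m k : ℕ} {Ω : Type*} [MeasurableSpace Ω] (P : Measure Ω)
    (A : Matrix (Fin m) (Fin m) ℝ) (w : Ω → Fin k → ℝ) (c : Ω → Fin m → ℝ)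
    (V : Matrix (Fin m) (Fin k) ℝ) : ℝ :=
  ∫ ω, 1 / 2 * ((V *ᵥ w ω - c ω) ⬝ᵥ (A *ᵥ (V *ᵥ w ω - c ω))) ∂P

/-- The least-squares objective `V ↦ E[(1/2)‖Vw − c‖₂²]`. -/
noncomputable def lsObj {m k : ℕ} {Ω : Type*} [MeasurableSpace Ω] (P : Measure Ω)
    (w : Ω → Fin k → ℝ) (c : Ω → Fin m → ℝ) (V : Matrix (Fin m) (Fin k) ℝ) : ℝ :=
  ∫ ω, 1 / 2 * (∑ j, ((V *ᵥ w ω - c ω) j) ^ 2) ∂P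

section CrossMoment

variable {ι κ l Ω : Type*} [MeasurableSpace Ω] {P : Measure Ω}

/-- The matrix `E[xyᵀ]` of mixed second moments of two random vectors. The vectors are not centred,
so that `crossMoment P w w` is the matrix `E[wwᵀ]` of the normal equations. -/
noncomputable def crossMoment (P : Measure Ω) (x : Ω → ι → ℝ) (y : Ω → κ → ℝ) : Matrix ι κ ℝ :=
  Matrix.of fun i j => ∫ ω, x ω i * y ω j ∂P

lemma transpose_crossMoment (x : Ω → ι → ℝ) (y : Ω → κ → ℝ) :
    (crossMoment P x y)ᵀ = crossMoment P y x := by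
  ext i j
  simp only [crossMoment, transpose_apply, of_apply, mul_comm]

variable [Fintype ι] [Fintype κ]

lemma memLp_two_of_integrable_sum_sq {x : Ω → ι → ℝ} (hx : AEStronglyMeasurable x P)
    (hx2 : Integrable (fun ω => ∑ i, x ω i ^ 2) P) : MemLp x 2 P := by
  refine MemLp.of_eval fun i => ?_
  have hxi : AEStronglyMeasurable (fun ω => x ω i) P :=
    (continuous_apply i).comp_aestronglyMeasurable hx
  refine (memLp_two_iff_integrable_sq hxi).2 (hx2.mono' (hxi.pow 2) (.of_forall fun ω => ?_))
  rw [Real.norm_of_nonneg (sq_nonneg _)]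
  exact Finset.single_le_sum (f := fun i => x ω i ^ 2) (fun _ _ => sq_nonneg _) (Finset.mem_univ i)

lemma memLp_mulVec [Fintype l] (V : Matrix l ι ℝ) {x : Ω → ι → ℝ} {p : ENNReal} (hx : MemLp x p P) :
    MemLp (fun ω => V *ᵥ x ω) p P :=
  V.mulVecLin.toContinuousLinearMap.comp_memLp' hx

lemma integrable_eval_mul_eval {x : Ω → ι → ℝ} {y : Ω → κ → ℝ} (hx : MemLp x 2 P)
    (hy : MemLp y 2 P) (i : ι) (j : κ) : Integrable (fun ω => x ω i * y ω j) P :=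
  (hx.eval i).integrable_mul (hy.eval j)

lemma integrable_dotProduct {x y : Ω → ι → ℝ} (hx : MemLp x 2 P) (hy : MemLp y 2 P) :
    Integrable (fun ω => x ω ⬝ᵥ y ω) P :=
  integrable_finsetSum _ fun i _ => integrable_eval_mul_eval hx hy i i

lemma integral_dotProduct_eq_trace_crossMoment {x y : Ω → ι → ℝ} (hx : MemLp x 2 P)
    (hy : MemLp y 2 P) : ∫ ω, x ω ⬝ᵥ y ω ∂P = (crossMoment P x y).trace :=
  integral_finsetSum _ fun i _ => integrable_eval_mul_eval hx hy i i

lemma crossMoment_sub_left {x x' : Ω → ι → ℝ} {y : Ω → κ → ℝ} (hx : MemLp x 2 P)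
    (hx' : MemLp x' 2 P) (hy : MemLp y 2 P) :
    crossMoment P (fun ω => x ω - x' ω) y = crossMoment P x y - crossMoment P x' y := by
  ext i j
  simp only [crossMoment, of_apply, Pi.sub_apply, Matrix.sub_apply, sub_mul]
  exact integral_sub (integrable_eval_mul_eval hx hy i j) (integrable_eval_mul_eval hx' hy i j)

lemma crossMoment_mulVec_left (V : Matrix l ι ℝ) {x : Ω → ι → ℝ} {y : Ω → κ → ℝ}
    (hx : MemLp x 2 P) (hy : MemLp y 2 P) :
    crossMoment P (fun ω => V *ᵥ x ω) y = V * crossMoment P x y := by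
  ext a j
  simp only [crossMoment, of_apply, mul_apply, mulVec, dotProduct, Finset.sum_mul, mul_assoc]
  rw [integral_finsetSum _ fun i _ => (integrable_eval_mul_eval hx hy i j).const_mul (V a i)]
  simp only [integral_const_mul]

lemma crossMoment_mulVec_right (V : Matrix l κ ℝ) {x : Ω → ι → ℝ} {y : Ω → κ → ℝ}
    (hx : MemLp x 2 P) (hy : MemLp y 2 P) :
    crossMoment P x (fun ω => V *ᵥ y ω) = crossMoment P x y * Vᵀ := by
  rw [← transpose_crossMoment, crossMoment_mulVec_left V hy hx, transpose_mul,
    transpose_crossMoment]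

end CrossMoment

lemma dotProduct_mulVec_add_self {ι R : Type*} [Fintype ι] [CommRing R] {A : Matrix ι ι R}
    (hA : A.IsSymm) (r d : ι → R) :
    (r + d) ⬝ᵥ (A *ᵥ (r + d)) = r ⬝ᵥ (A *ᵥ r) + 2 * ((A *ᵥ r) ⬝ᵥ d) + d ⬝ᵥ (A *ᵥ d) := by
  have hsymm : r ⬝ᵥ (A *ᵥ d) = (A *ᵥ r) ⬝ᵥ d := by
    rw [dotProduct_mulVec, ← mulVec_transpose, hA.eq]
  rw [mulVec_add, add_dotProduct, dotProduct_add, dotProduct_add, hsymm,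
    dotProduct_comm d (A *ᵥ r)]
  ring

lemma injective_matrix_mul_right {ι n R : Type*} [Fintype n] [DecidableEq n] [CommRing R]
    {M : Matrix n n R} (hM : IsUnit M) : Function.Injective fun X : Matrix ι n R => X * M := by
  obtain ⟨N, hN⟩ := hM.exists_right_inv
  exact mul_left_injective_of_inv M N hN

lemma eq_zero_of_forall_nonneg_quadratic {𝕜 : Type*} [Field 𝕜] [LinearOrder 𝕜]
    [IsStrictOrderedRing 𝕜] {a b : 𝕜} (h : ∀ t, 0 ≤ t * b + t ^ 2 * a) : b = 0 := by
  have hdiscrim : discrim a b 0 ≤ 0 := discrim_le_zero fun t => by linarith [h t]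
  exact sq_nonpos_iff b |>.1 (by simpa [discrim] using hdiscrim)

section Objective

variable {m k : ℕ} {Ω : Type*} [MeasurableSpace Ω] {P : Measure Ω}
  {A : Matrix (Fin m) (Fin m) ℝ} {w : Ω → Fin k → ℝ} {c : Ω → Fin m → ℝ}

lemma lsObj_eq_quadObj_one (V : Matrix (Fin m) (Fin k) ℝ) : lsObj P w c V = quadObj P 1 w c V := by
  simp only [lsObj, quadObj, one_mulVec, dotProduct, sq]

lemma quadObj_nonneg (hA : A.PosSemidef) (V : Matrix (Fin m) (Fin k) ℝ) :
    0 ≤ quadObj P A w c V :=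
  integral_nonneg fun ω =>
    mul_nonneg one_half_pos.le (hA.dotProduct_mulVec_nonneg (V *ᵥ w ω - c ω))

lemma quadObj_zero_smul (t : ℝ) (D : Matrix (Fin m) (Fin k) ℝ) :
    quadObj P A w 0 (t • D) = t ^ 2 * quadObj P A w 0 D := by
  simp only [quadObj, Pi.zero_apply, sub_zero]
  rw [← integral_const_mul]
  refine integral_congr_ae (.of_forall fun ω => ?_)
  simp only [smul_mulVec, mulVec_smul, smul_dotProduct, dotProduct_smul, smul_eq_mul]
  ring

/-- The gradient at `V` of `quadObj P A w c`, for the Frobenius inner product on matrices and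
symmetric `A`; see `quadObj_add`. -/
noncomputable def quadGrad (P : Measure Ω) (A : Matrix (Fin m) (Fin m) ℝ) (w : Ω → Fin k → ℝ)
    (c : Ω → Fin m → ℝ) (V : Matrix (Fin m) (Fin k) ℝ) : Matrix (Fin m) (Fin k) ℝ :=
  A * (V * crossMoment P w w - crossMoment P c w)

lemma integral_mulVec_residual_dotProduct (hw : MemLp w 2 P) (hc : MemLp c 2 P)
    (V D : Matrix (Fin m) (Fin k) ℝ) :
    ∫ ω, (A *ᵥ (V *ᵥ w ω - c ω)) ⬝ᵥ (D *ᵥ w ω) ∂P = (quadGrad P A w c V * Dᵀ).trace := by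
  have hVw := memLp_mulVec V hw
  have hres : MemLp (fun ω => V *ᵥ w ω - c ω) 2 P := hVw.sub hc
  rw [integral_dotProduct_eq_trace_crossMoment (memLp_mulVec A hres) (memLp_mulVec D hw),
    crossMoment_mulVec_right D (memLp_mulVec A hres) hw, crossMoment_mulVec_left A hres hw,
    crossMoment_sub_left hVw hc hw, crossMoment_mulVec_left V hw hw, quadGrad]

lemma quadObj_add (hA : A.IsSymm) (hw : MemLp w 2 P) (hc : MemLp c 2 P)
    (V D : Matrix (Fin m) (Fin k) ℝ) :
    quadObj P A w c (V + D) =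
      quadObj P A w c V + (quadGrad P A w c V * Dᵀ).trace + quadObj P A w 0 D := by
  have hres : MemLp (fun ω => V *ᵥ w ω - c ω) 2 P := (memLp_mulVec V hw).sub hc
  have hDw := memLp_mulVec D hw
  have hquad {x : Ω → Fin m → ℝ} (hx : MemLp x 2 P) :
      Integrable (fun ω => 1 / 2 * (x ω ⬝ᵥ (A *ᵥ x ω))) P :=
    (integrable_dotProduct hx (memLp_mulVec A hx)).const_mul _
  have hcross := integrable_dotProduct (memLp_mulVec A hres) hDw
  have hexpand (ω : Ω) :
      1 / 2 * (((V + D) *ᵥ w ω - c ω) ⬝ᵥ (A *ᵥ ((V + D) *ᵥ w ω - c ω))) =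
        1 / 2 * ((V *ᵥ w ω - c ω) ⬝ᵥ (A *ᵥ (V *ᵥ w ω - c ω))) +
          (A *ᵥ (V *ᵥ w ω - c ω)) ⬝ᵥ (D *ᵥ w ω) +
          1 / 2 * ((D *ᵥ w ω) ⬝ᵥ (A *ᵥ (D *ᵥ w ω))) := by
    rw [add_mulVec, add_sub_right_comm, dotProduct_mulVec_add_self hA]
    ring
  simp only [quadObj, Pi.zero_apply, sub_zero, hexpand]
  rw [← integral_mulVec_residual_dotProduct hw hc, ← integral_add (hquad hres) hcross]
  exact integral_add ((hquad hres).add hcross) (hquad hDw)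

lemma forall_quadObj_le_iff_quadGrad_eq_zero (hA : A.PosSemidef) (hw : MemLp w 2 P)
    (hc : MemLp c 2 P) (V : Matrix (Fin m) (Fin k) ℝ) :
    (∀ V', quadObj P A w c V ≤ quadObj P A w c V') ↔ quadGrad P A w c V = 0 := by
  have hadd := quadObj_add (isHermitian_iff_isSymm.1 hA.isHermitian) hw hc V
  refine ⟨fun hmin => ?_, fun hgrad V' => ?_⟩
  · have horth (D : Matrix (Fin m) (Fin k) ℝ) : (quadGrad P A w c V * Dᵀ).trace = 0 := by
      refine eq_zero_of_forall_nonneg_quadratic (a := quadObj P A w 0 D) fun t => ?_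
      have hle := hmin (V + t • D)
      rw [hadd, quadObj_zero_smul, transpose_smul, Matrix.mul_smul, trace_smul, smul_eq_mul] at hle
      linarith
    refine ext_iff_trace_mul_right.2 fun D => ?_
    rw [Matrix.zero_mul, trace_zero, ← horth Dᵀ, transpose_transpose]
  · have hV' := hadd (V' - V)
    rw [hgrad, Matrix.zero_mul, trace_zero, add_zero, add_sub_cancel] at hV'
    linarith [quadObj_nonneg (P := P) (w := w) (c := 0) hA (V' - V)]

lemma forall_lsObj_le_iff_mul_crossMoment_eq (hw : MemLp w 2 P) (hc : MemLp c 2 P)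
    (V : Matrix (Fin m) (Fin k) ℝ) :
    (∀ V', lsObj P w c V ≤ lsObj P w c V') ↔ V * crossMoment P w w = crossMoment P c w := by
  simp only [lsObj_eq_quadObj_one]
  rw [forall_quadObj_le_iff_quadGrad_eq_zero PosSemidef.one hw hc, quadGrad, Matrix.one_mul,
    sub_eq_zero]

lemma forall_quadObj_le_of_forall_lsObj_le (hA : A.PosSemidef) (hw : MemLp w 2 P)
    (hc : MemLp c 2 P) {V : Matrix (Fin m) (Fin k) ℝ}
    (hV : ∀ V', lsObj P w c V ≤ lsObj P w c V') (V' : Matrix (Fin m) (Fin k) ℝ) :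
    quadObj P A w c V ≤ quadObj P A w c V' := by
  refine (forall_quadObj_le_iff_quadGrad_eq_zero hA hw hc V).2 ?_ V'
  rw [quadGrad, (forall_lsObj_le_iff_mul_crossMoment_eq hw hc V).1 hV, sub_self, Matrix.mul_zero]

lemma forall_quadObj_le_iff_mul_sub_eq_zero (hA : A.PosSemidef) (hw : MemLp w 2 P)
    (hc : MemLp c 2 P) (hinv : IsUnit (crossMoment P w w)) {VLS : Matrix (Fin m) (Fin k) ℝ}
    (hVLS : VLS * crossMoment P w w = crossMoment P c w) (V : Matrix (Fin m) (Fin k) ℝ) :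
    (∀ V', quadObj P A w c V ≤ quadObj P A w c V') ↔ A * (V - VLS) = 0 := by
  rw [forall_quadObj_le_iff_quadGrad_eq_zero hA hw hc, quadGrad, ← hVLS, ← Matrix.sub_mul,
    ← Matrix.mul_assoc]
  exact (injective_matrix_mul_right hinv).eq_iff' (Matrix.zero_mul _)

end Objective

theorem statement15_general {m k : ℕ} {Ω : Type*} [MeasurableSpace Ω] (P : Measure Ω)
    (A : Matrix (Fin m) (Fin m) ℝ) (hA : A.PosSemidef)
    (w : Ω → Fin k → ℝ) (c : Ω → Fin m → ℝ) (hw : MemLp w 2 P) (hc : MemLp c 2 P)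
    (hinv : IsUnit (crossMoment P w w)) :
    ∃ VLS : Matrix (Fin m) (Fin k) ℝ,
      (∀ V, lsObj P w c VLS ≤ lsObj P w c V) ∧
      (∀ V, (∀ V', lsObj P w c V ≤ lsObj P w c V') → V = VLS) ∧
      {V : Matrix (Fin m) (Fin k) ℝ | ∀ V', quadObj P A w c V ≤ quadObj P A w c V'}
        = {V : Matrix (Fin m) (Fin k) ℝ |
            ∃ Vt : Matrix (Fin m) (Fin k) ℝ, A * Vt = 0 ∧ V = VLS + Vt} ∧
      (∀ V : Matrix (Fin m) (Fin k) ℝ,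
        (∀ V', lsObj P w c V ≤ lsObj P w c V') →
        ∀ V', quadObj P A w c V ≤ quadObj P A w c V') := by
  obtain ⟨N, hN⟩ := hinv.exists_left_inv
  have hVLS : crossMoment P c w * N * crossMoment P w w = crossMoment P c w := by
    rw [Matrix.mul_assoc, hN, Matrix.mul_one]
  have hls := forall_lsObj_le_iff_mul_crossMoment_eq hw hc
  refine ⟨crossMoment P c w * N, (hls _).2 hVLS, fun V hV => ?_, ?_,
    fun V hV => forall_quadObj_le_of_forall_lsObj_le hA hw hc hV⟩
  · exact injective_matrix_mul_right hinv (((hls V).1 hV).trans hVLS.symm)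
  · ext V
    rw [Set.mem_ofPred_eq, forall_quadObj_le_iff_mul_sub_eq_zero hA hw hc hinv hVLS]
    exact ⟨fun hV => ⟨_, hV, (add_sub_cancel _ V).symm⟩,
      fun ⟨Vt, hVt, hV⟩ => by rwa [hV, add_sub_cancel_left]⟩

/-- for `A ⪰ 0` and `E[wwᵀ]` invertible, the minimizers of
`E[(1/2)(Vw−c)ᵀA(Vw−c)]` are exactly `V_LS + Ṽ` with `AṼ = 0`, where `V_LS` is the unique
least-squares minimizer; in particular every least-squares minimizer minimizes the `A`-weighted
objective. -/
theorem statement15 {m k : ℕ} {Ω : Type*} [MeasurableSpace Ω]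
    (P : Measure Ω) [IsProbabilityMeasure P]
    (A : Matrix (Fin m) (Fin m) ℝ) (hA : A.PosSemidef)
    (w : Ω → Fin k → ℝ) (c : Ω → Fin m → ℝ)
    (hw : Measurable w) (hc : Measurable c)
    (hw2 : Integrable (fun ω => ∑ i, (w ω i) ^ 2) P)
    (hc2 : Integrable (fun ω => ∑ j, (c ω j) ^ 2) P)
    (hinv : IsUnit (Matrix.of fun i j : Fin k => ∫ ω, w ω i * w ω j ∂P)) :
    ∃ VLS : Matrix (Fin m) (Fin k) ℝ,
      (∀ V, lsObj P w c VLS ≤ lsObj P w c V) ∧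
      (∀ V, (∀ V', lsObj P w c V ≤ lsObj P w c V') → V = VLS) ∧
      {V : Matrix (Fin m) (Fin k) ℝ | ∀ V', quadObj P A w c V ≤ quadObj P A w c V'}
        = {V : Matrix (Fin m) (Fin k) ℝ | ∃ Vt : Matrix (Fin m) (Fin k) ℝ, A * Vt = 0 ∧ V = VLS + Vt} ∧
      (∀ V : Matrix (Fin m) (Fin k) ℝ,
        (∀ V', lsObj P w c V ≤ lsObj P w c V') →
        ∀ V', quadObj P A w c V ≤ quadObj P A w c V') := by
  exact statement15_general P A hA w c
    (memLp_two_of_integrable_sum_sq hw.aestronglyMeasurable hw2)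
    (memLp_two_of_integrable_sum_sq hc.aestronglyMeasurable hc2) hinv
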